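/- Fix integers 1 ≤ k ≤ n and write n = k·a + b with a ≥ 0 and 0 ≤ b ≤ k−1. Then the number of k-vacillating parking functions of length n is |VPF_n(k)| = ( n! / Π_{t=0}^{k-1} ⌊(n+t)/k⌋! ) · |VPF_{a+1}|^b · |VPF_a|^{k−b}, where |VPF_0| := 1 and VPF_m (m ≥ 1) denotes the set of 1-vacillating parking functions of length m. -/

import Mathlib

/-- One car with (1-indexed) preference `p` attempts to park on a one-way street with
spots `1,…,n` under the `k`-vacillating rule, given the set `occ` of occupied spots:
it parks in spot `p` if unoccupied; otherwise in spot `p - k` if `p - k ≥ 1` and it is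
unoccupied; otherwise in spot `p + k` if `p + k ≤ n` and it is unoccupied; otherwise it
fails to park (`none`). -/
def parkStep (n k : ℕ) (occ : Finset ℕ) (p : ℕ) : Option ℕ :=
  if p ∉ occ then some p
  else if k < p ∧ p - k ∉ occ then some (p - k)
  else if p + k ≤ n ∧ p + k ∉ occ then some (p + k)
  else none

/-- Park the cars whose preference list is given, in order, under the `k`-vacillating
rule on a street with spots `1,…,n`, starting from occupied set `occ`.  Returns the list
of spots occupied by the cars (in the order the cars arrive), or `none` if some car
fails to park. -/
def parkAssign (n k : ℕ) (occ : Finset ℕ) : List ℕ → Option (List ℕ)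
  | [] => some []
  | p :: ps =>
    match parkStep n k occ p with
    | none => none
    | some s => (parkAssign n k (insert s occ) ps).map (s :: ·)

/-- The 1-indexed preference list in `[n]^m` associated to `α : Fin m → Fin n`
(car `i+1` prefers spot `α i + 1`). -/
def prefList {m n : ℕ} (α : Fin m → Fin n) : List ℕ :=
  List.ofFn fun i => (α i : ℕ) + 1

/-- The set of `k`-vacillating parking functions of length `n`:
preference lists in `[n]^n` (encoded as `Fin n → Fin n`) for which all `n` cars park. -/
def VPFk (n k : ℕ) : Finset (Fin n → Fin n) :=
  Finset.univ.filter fun α => (parkAssign n k ∅ (prefList α)).isSome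

/-- The set of vacillating parking functions of length `n` (the case `k = 1`). -/
def VPF (n : ℕ) : Finset (Fin n → Fin n) := VPFk n 1

/-!
A car only ever compares spots of one residue class modulo `k`, and along such a class the
`k`-vacillating rule is the `1`-vacillating rule. Splitting a preference word into its subwords on
the classes therefore exhibits the language of words for which all cars park as the shuffle product
of the analogous languages of the classes.

The exponential generating function of a shuffle product is the product of those of the factors:
differentiating deletes the first letter, and deleting the first letter of a shuffle obeys the
Leibniz rule. At most as many cars as there are spots can park, so the factor of a class of length
`m` is a polynomial of degree at most `m`; since the lengths `⌊(n+t)/k⌋` sum to `n`, only the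
product of the top coefficients `|VPF_m| / m!` contributes to the coefficient of `X ^ n`.
-/

open Finset PowerSeries

section Algebra

variable {ι R A M : Type*} [CommSemiring R]

theorem derivation_prod [DecidableEq ι] [CommSemiring A] [AddCommMonoid M] [Algebra R A]
    [Module A M] [Module R M] (D : Derivation R A M) (s : Finset ι) (f : ι → A) :
    D (∏ i ∈ s, f i) = ∑ i ∈ s, (∏ j ∈ s.erase i, f j) • D (f i) := by
  induction s using Finset.induction_on with
  | empty => simp
  | insert i s hi ih =>
    rw [prod_insert hi, D.leibniz, ih, smul_sum, sum_insert hi, erase_insert hi, add_comm]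
    congr 1
    refine sum_congr rfl fun j hj => ?_
    have hij : i ≠ j := fun h => hi (h ▸ hj)
    rw [smul_smul, erase_insert_of_ne hij, prod_insert fun h => hi (mem_of_mem_erase h)]

theorem coeff_sum_prod_of_coeff_eq_zero (s : Finset ι) (f : ι → R⟦X⟧) (d : ι → ℕ)
    (hf : ∀ i ∈ s, ∀ m, d i < m → coeff m (f i) = 0) :
    coeff (∑ i ∈ s, d i) (∏ i ∈ s, f i) = ∏ i ∈ s, coeff (d i) (f i) := by
  classical
  have hd (i) (hi : i ∈ s) : Finsupp.indicator s (fun i _ => d i) i = d i :=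
    Finsupp.indicator_of_mem hi _
  rw [coeff_prod, sum_eq_single (Finsupp.indicator s fun i _ => d i)]
  · exact prod_congr rfl fun i hi => by rw [hd i hi]
  · intro l hl hne
    obtain ⟨hsum, hsupp⟩ := mem_finsuppAntidiag.1 hl
    suffices h : ∃ i ∈ s, d i < l i by
      obtain ⟨i, hi, hlt⟩ := h
      exact prod_eq_zero hi (hf i hi _ hlt)
    by_contra! hle
    refine hne (Finsupp.ext fun i => ?_)
    by_cases hi : i ∈ s
    · rw [hd i hi, (sum_eq_sum_iff_of_le hle).1 hsum i hi]
    · rw [Finsupp.indicator_of_notMem hi, Finsupp.notMem_support_iff.1 fun h => hi (hsupp h)]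
  · refine fun h => absurd (mem_finsuppAntidiag.2 ⟨sum_congr rfl hd, ?_⟩) h
    exact Finsupp.support_indicator_subset _ _

end Algebra

section Words

variable {A B : Type*}

/-- The number of words of length `n` in the language `L`. -/
noncomputable def wordCount (L : Language A) (n : ℕ) : ℕ :=
  Nat.card {w : Fin n → A // List.ofFn w ∈ L}

theorem wordCount_zero (L : Language A) [Decidable ([] ∈ L)] :
    wordCount L 0 = if [] ∈ L then 1 else 0 := by
  split_ifs with h <;> simp [wordCount, h]

theorem wordCount_succ [Fintype A] (L : Language A) (n : ℕ) :
    wordCount L (n + 1) = ∑ x, wordCount (L.leftQuotient [x]) n := by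
  simp only [wordCount, Language.mem_leftQuotient, List.singleton_append]
  rw [← Nat.card_sigma]
  exact Nat.card_congr <|
    ((Fin.consEquiv fun _ => A).symm.subtypeEquiv fun w => by
      rw [List.ofFn_succ]; rfl).trans
    (Equiv.subtypeProdEquivSigmaSubtype fun x w => x :: List.ofFn w ∈ L)

theorem wordCount_congr {L : Language A} {M : Language B} {f : A → B} (hf : f.Bijective)
    (h : ∀ w, w ∈ L ↔ w.map f ∈ M) (n : ℕ) : wordCount L n = wordCount M n :=
  Nat.card_congr <| ((Equiv.refl (Fin n)).arrowCongr (.ofBijective f hf)).subtypeEquiv fun w => by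
    rw [h, List.map_ofFn]; rfl

/-- The exponential generating function of a language, words being weighted by length. -/
noncomputable def wordEGF (L : Language A) : ℚ⟦X⟧ :=
  PowerSeries.mk fun n => (wordCount L n : ℚ) / n.factorial

theorem coeff_wordEGF (L : Language A) (n : ℕ) :
    coeff n (wordEGF L) = (wordCount L n : ℚ) / n.factorial :=
  coeff_mk _ _

theorem derivative_wordEGF [Fintype A] (L : Language A) :
    derivative ℚ (wordEGF L) = ∑ x, wordEGF (L.leftQuotient [x]) := by
  ext n
  rw [coeff_derivative, map_sum]
  simp only [coeff_wordEGF]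
  rw [wordCount_succ, ← sum_div, Nat.cast_sum, Nat.factorial_succ]
  push_cast
  field_simp

end Words

section Shuffle

variable {κ : Type*} {A : κ → Type*} [DecidableEq κ]

/-- The shuffle product of a family of languages over disjoint alphabets: the words all of whose
subwords on a single alphabet lie in the corresponding language. -/
def shuffle (L : ∀ c, Language (A c)) : Language (Σ c, A c) :=
  {w | ∀ c, w.lookupAll c ∈ L c}

theorem mem_shuffle {L : ∀ c, Language (A c)} {w : List (Σ c, A c)} :
    w ∈ shuffle L ↔ ∀ c, w.lookupAll c ∈ L c :=
  Iff.rfl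

theorem leftQuotient_shuffle (L : ∀ c, Language (A c)) (c : κ) (x : A c) :
    (shuffle L).leftQuotient [⟨c, x⟩] =
      shuffle (Function.update L c ((L c).leftQuotient [x])) := by
  ext w
  refine forall_congr' fun d => ?_
  rcases eq_or_ne d c with rfl | hdc
  · simp
  · simp [hdc]

theorem wordEGF_shuffle [Fintype κ] [∀ c, Finite (A c)] (L : ∀ c, Language (A c)) :
    wordEGF (shuffle L) = ∏ c, wordEGF (L c) := by
  classical
  have (c : κ) : Fintype (A c) := Fintype.ofFinite (A c)
  ext n
  induction n generalizing L with
  | zero =>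
    simp only [coeff_zero_eq_constantCoeff_apply, map_prod]
    simp [← coeff_zero_eq_constantCoeff_apply, coeff_wordEGF, wordCount_zero, mem_shuffle,
      prod_boole]
  | succ n ih =>
    have hcoeff : coeff n (derivative ℚ (wordEGF (shuffle L))) =
        coeff n (derivative ℚ (∏ c, wordEGF (L c))) := by
      rw [derivative_wordEGF, Fintype.sum_sigma, derivation_prod, map_sum, map_sum]
      refine sum_congr rfl fun c _ => ?_
      rw [derivative_wordEGF, smul_sum, map_sum, map_sum]
      refine sum_congr rfl fun x _ => ?_
      simp only [leftQuotient_shuffle, ih, Function.apply_update fun _ => wordEGF]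
      rw [prod_update_of_mem (mem_univ c), sdiff_singleton_eq_erase, mul_comm, smul_eq_mul]
    rw [coeff_derivative, coeff_derivative] at hcoeff
    exact mul_right_cancel₀ (by positivity) hcoeff

end Shuffle

section Parking

/-- The language of preference words, in `0`-indexed spots, whose cars all park on the street
`1,…,n` when the spots in `occ` are occupied beforehand. -/
def parkLanguage (n k : ℕ) (occ : Finset ℕ) : Language (Fin n) :=
  {w : List (Fin n) | (parkAssign n k occ (w.map fun i : Fin n => (i : ℕ) + 1)).isSome}

theorem mem_parkLanguage {n k : ℕ} {occ : Finset ℕ} {w : List (Fin n)} :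
    w ∈ parkLanguage n k occ ↔ (parkAssign n k occ (w.map fun i : Fin n => (i : ℕ) + 1)).isSome :=
  Iff.rfl

theorem card_VPFk_eq_wordCount (n k : ℕ) :
    (VPFk n k).card = wordCount (parkLanguage n k ∅) n :=
  (Nat.subtype_card _ fun α => by
    rw [VPFk, mem_filter_univ, prefList, mem_parkLanguage, List.map_ofFn]
    rfl).symm

theorem nil_mem_parkLanguage (n k : ℕ) (occ : Finset ℕ) : [] ∈ parkLanguage n k occ :=
  rfl

theorem cons_mem_parkLanguage {n k : ℕ} {occ : Finset ℕ} {i : Fin n} {w : List (Fin n)} :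
    i :: w ∈ parkLanguage n k occ ↔
      ∃ s, parkStep n k occ (i + 1) = some s ∧ w ∈ parkLanguage n k (insert s occ) := by
  simp only [mem_parkLanguage, List.map_cons, parkAssign]
  cases parkStep n k occ (i + 1) <;> simp

theorem val_add_one_mem_Icc {m : ℕ} (j : Fin m) : (j : ℕ) + 1 ∈ Icc 1 m :=
  mem_Icc.2 ⟨Nat.le_add_left 1 j, j.isLt⟩

theorem mem_Icc_and_notMem_of_parkStep_eq_some {n k p s : ℕ} {occ : Finset ℕ} (hp : p ∈ Icc 1 n)
    (h : parkStep n k occ p = some s) : s ∈ Icc 1 n ∧ s ∉ occ := by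
  rw [mem_Icc] at *
  unfold parkStep at h
  split_ifs at h with hp_occ hpred hsucc <;> obtain rfl := Option.some.inj h <;>
    exact ⟨by omega, by tauto⟩

theorem length_add_card_le_of_mem_parkLanguage {n k : ℕ} {occ : Finset ℕ} {w : List (Fin n)}
    (hocc : occ ⊆ Icc 1 n) (hw : w ∈ parkLanguage n k occ) : w.length + occ.card ≤ n := by
  induction w generalizing occ with
  | nil => simpa using card_le_card hocc
  | cons i w ih =>
    obtain ⟨s, hs, hw⟩ := cons_mem_parkLanguage.1 hw
    obtain ⟨hsn, hs_occ⟩ := mem_Icc_and_notMem_of_parkStep_eq_some (val_add_one_mem_Icc i) hs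
    have := ih (insert_subset hsn hocc) hw
    rw [card_insert_of_notMem hs_occ] at this
    rw [List.length_cons]
    omega

theorem wordCount_parkLanguage_eq_zero {n k m : ℕ} (hm : n < m) :
    wordCount (parkLanguage n k ∅) m = 0 := by
  refine Nat.card_eq_zero.2 <| .inl ⟨fun w => hm.not_ge ?_⟩
  simpa using length_add_card_le_of_mem_parkLanguage (empty_subset _) w.2

/-- The `j`-th spot of the residue class of `-t` modulo `k`, for `t < k` and `j ≥ 1`.
With this indexing there are exactly `⌊(n+t)/k⌋` such spots among `1,…,n`. -/
def classSpot (k t j : ℕ) : ℕ := j * k - t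

theorem classSpot_add {k t j : ℕ} (ht : t < k) (hj : 1 ≤ j) : classSpot k t j + t = j * k :=
  Nat.sub_add_cancel (ht.le.trans (Nat.le_mul_of_pos_left k hj))

theorem classSpot_succ {k t j : ℕ} (ht : t < k) (hj : 1 ≤ j) :
    classSpot k t (j + 1) = classSpot k t j + k := by
  have := classSpot_add ht hj
  have := classSpot_add ht (j := j + 1) (by omega)
  rw [Nat.succ_mul] at this
  omega

theorem classSpot_sub (k t j : ℕ) : classSpot k t j - k = classSpot k t (j - 1) := by
  rw [classSpot, classSpot, Nat.sub_mul, one_mul, Nat.sub_right_comm]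

theorem lt_classSpot_iff {k t : ℕ} (ht : t < k) (j : ℕ) : k < classSpot k t j ↔ 1 < j := by
  rcases j with _ | _ | j
  · simp [classSpot]
  · simp [classSpot]
  · rw [classSpot, Nat.succ_mul, Nat.succ_mul]
    omega

theorem classSpot_le_iff {k t : ℕ} (ht : t < k) (n j : ℕ) :
    classSpot k t j ≤ n ↔ j ≤ (n + t) / k := by
  rw [classSpot, Nat.sub_le_iff_le_add, Nat.le_div_iff_mul_le (by omega)]

theorem classSpot_inj {k s t i j : ℕ} (hs : s < k) (ht : t < k) (hi : 1 ≤ i) (hj : 1 ≤ j) :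
    classSpot k s i = classSpot k t j ↔ s = t ∧ i = j := by
  refine ⟨fun h => ?_, by rintro ⟨rfl, rfl⟩; rfl⟩
  have heq : t + i * k = s + j * k := by
    have := classSpot_add hs hi
    have := classSpot_add ht hj
    omega
  have hts : t = s := by
    simpa [Nat.mod_eq_of_lt hs, Nat.mod_eq_of_lt ht] using congrArg (· % k) heq
  subst hts
  exact ⟨rfl, Nat.eq_of_mul_eq_mul_right (by omega) (Nat.add_left_cancel heq)⟩

theorem exists_classSpot_eq {k p : ℕ} (hk : 0 < k) (hp : 1 ≤ p) :
    ∃ t < k, ∃ j, classSpot k t (j + 1) = p := by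
  refine ⟨k - 1 - (p - 1) % k, by omega, (p - 1) / k, ?_⟩
  have := Nat.mod_lt (p - 1) hk
  have := Nat.mod_add_div' (p - 1) k
  rw [classSpot, Nat.succ_mul]
  omega

theorem classSpot_mem_Icc {n k t j : ℕ} (ht : t < k) (hj : j ∈ Icc 1 ((n + t) / k)) :
    classSpot k t j ∈ Icc 1 n := by
  rw [mem_Icc] at *
  have := classSpot_add ht hj.1
  have := Nat.le_mul_of_pos_left k hj.1
  exact ⟨by omega, (classSpot_le_iff ht n j).2 hj.2⟩

/-- The `0`-indexed position on the street `1,…,n` of a spot given by its class and its `0`-indexed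
position in the class. -/
def classIndex {n k : ℕ} (x : Σ t : Fin k, Fin ((n + t) / k)) : Fin n :=
  ⟨classSpot k x.1 (x.2 + 1) - 1, by
    have := mem_Icc.1 (classSpot_mem_Icc x.1.isLt (val_add_one_mem_Icc x.2))
    omega⟩

theorem val_classIndex_add_one {n k : ℕ} (t : Fin k) (j : Fin ((n + t) / k)) :
    (classIndex ⟨t, j⟩ : ℕ) + 1 = classSpot k t (j + 1) :=
  Nat.sub_add_cancel (mem_Icc.1 (classSpot_mem_Icc t.isLt (val_add_one_mem_Icc j))).1

theorem classIndex_bijective (n : ℕ) {k : ℕ} (hk : 0 < k) :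
    Function.Bijective (classIndex : (Σ t : Fin k, Fin ((n + t) / k)) → Fin n) := by
  constructor
  · rintro ⟨s, i⟩ ⟨t, j⟩ h
    have hspot : classSpot k s (i + 1) = classSpot k t (j + 1) := by
      rw [← val_classIndex_add_one, ← val_classIndex_add_one, h]
    obtain ⟨hst, hij⟩ := (classSpot_inj s.isLt t.isLt (by omega) (by omega)).1 hspot
    obtain rfl := Fin.ext hst
    obtain rfl : i = j := Fin.ext (by omega)
    rfl
  · intro i
    obtain ⟨t, ht, j, hj⟩ := exists_classSpot_eq hk (Nat.succ_pos i)
    have hjn : j + 1 ≤ (n + t) / k := (classSpot_le_iff ht n _).1 (hj ▸ i.isLt)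
    refine ⟨⟨⟨t, ht⟩, ⟨j, hjn⟩⟩, Fin.ext <| Nat.succ_injective ?_⟩
    exact (val_classIndex_add_one ⟨t, ht⟩ ⟨j, hjn⟩).trans hj

theorem sum_range_add_div (n : ℕ) {k : ℕ} (hk : 0 < k) : ∑ t ∈ range k, (n + t) / k = n := by
  simpa [sum_range] using Fintype.card_of_bijective (classIndex_bijective n hk)

/-- The occupied spots of the class of `-t` modulo `k`, numbered from `1` within the class. -/
def classOcc (n k : ℕ) (occ : Finset ℕ) (t : ℕ) : Finset ℕ :=
  {j ∈ Icc 1 ((n + t) / k) | classSpot k t j ∈ occ}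

theorem parkStep_classSpot {n k t j : ℕ} (occ : Finset ℕ) (ht : t < k)
    (hj : j ∈ Icc 1 ((n + t) / k)) :
    parkStep n k occ (classSpot k t j) =
      (parkStep ((n + t) / k) 1 (classOcc n k occ t) j).map (classSpot k t) := by
  have hmem {i : ℕ} (hi : i ∈ Icc 1 ((n + t) / k)) :
      classSpot k t i ∈ occ ↔ i ∈ classOcc n k occ t := by
    rw [classOcc, mem_filter, and_iff_right hi]
  obtain ⟨hj1, hjn⟩ := mem_Icc.1 hj
  have hpred : (k < classSpot k t j ∧ classSpot k t j - k ∉ occ) ↔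
      1 < j ∧ j - 1 ∉ classOcc n k occ t := by
    rw [lt_classSpot_iff ht]
    refine and_congr_right fun h => ?_
    rw [classSpot_sub, hmem (mem_Icc.2 (by omega))]
  have hsucc : (classSpot k t j + k ≤ n ∧ classSpot k t j + k ∉ occ) ↔
      j + 1 ≤ (n + t) / k ∧ j + 1 ∉ classOcc n k occ t := by
    rw [← classSpot_succ ht hj1, classSpot_le_iff ht]
    refine and_congr_right fun h => ?_
    rw [hmem (mem_Icc.2 (by omega))]
  simp only [parkStep, hmem hj, hpred, hsucc]
  split_ifs <;> simp [classSpot_sub, classSpot_succ ht hj1]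

theorem classOcc_insert_self {n k t s : ℕ} (occ : Finset ℕ) (ht : t < k)
    (hs : s ∈ Icc 1 ((n + t) / k)) :
    classOcc n k (insert (classSpot k t s) occ) t = insert s (classOcc n k occ t) := by
  have hinj (j : ℕ) (hj : j ∈ Icc 1 ((n + t) / k)) : classSpot k t j = classSpot k t s ↔ j = s := by
    simp [classSpot_inj ht ht (mem_Icc.1 hj).1 (mem_Icc.1 hs).1]
  ext j
  simp only [classOcc, mem_filter, mem_insert]
  grind

theorem classOcc_insert_of_ne {n k t u s : ℕ} (occ : Finset ℕ) (ht : t < k) (hu : u < k)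
    (hs : 1 ≤ s) (hut : u ≠ t) :
    classOcc n k (insert (classSpot k t s) occ) u = classOcc n k occ u := by
  refine filter_congr fun j hj => ?_
  simp [classSpot_inj hu ht (mem_Icc.1 hj).1 hs, hut]

theorem map_classIndex_mem_parkLanguage_iff {n k : ℕ} (occ : Finset ℕ)
    (w : List (Σ t : Fin k, Fin ((n + t) / k))) :
    w.map classIndex ∈ parkLanguage n k occ ↔
      w ∈ shuffle fun t : Fin k => parkLanguage ((n + t) / k) 1 (classOcc n k occ t) := by
  induction w generalizing occ with
  | nil => simp [mem_shuffle, nil_mem_parkLanguage]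
  | cons x w ih =>
    obtain ⟨t, j⟩ := x
    rw [List.map_cons, cons_mem_parkLanguage, val_classIndex_add_one,
      parkStep_classSpot occ t.isLt (val_add_one_mem_Icc j)]
    cases hs : parkStep ((n + t) / k) 1 (classOcc n k occ t) (j + 1) with
    | none =>
      have hnot : ⟨t, j⟩ :: w ∉
          shuffle fun u : Fin k => parkLanguage ((n + u) / k) 1 (classOcc n k occ u) := fun h => by
        simpa [cons_mem_parkLanguage, hs] using h t
      simpa using hnot
    | some s =>
      have hs_mem := (mem_Icc_and_notMem_of_parkStep_eq_some (val_add_one_mem_Icc j) hs).1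
      simp only [Option.map_some, Option.some_inj, exists_eq_left', ih, mem_shuffle]
      refine forall_congr' fun u => ?_
      rcases eq_or_ne u t with rfl | hut
      · rw [List.lookupAll_cons_eq, cons_mem_parkLanguage, classOcc_insert_self occ u.isLt hs_mem]
        simp [hs]
      · rw [List.lookupAll_cons_ne _ _ hut,
          classOcc_insert_of_ne occ t.isLt u.isLt (mem_Icc.1 hs_mem).1 (Fin.val_ne_of_ne hut)]

theorem card_VPFk_div_factorial (n : ℕ) {k : ℕ} (hk : 0 < k) :
    ((VPFk n k).card : ℚ) / n.factorial =
      ∏ t ∈ range k, ((VPF ((n + t) / k)).card : ℚ) / ((n + t) / k).factorial := by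
  have hmem (w : List (Σ t : Fin k, Fin ((n + t) / k))) :
      w ∈ shuffle (fun t : Fin k => parkLanguage ((n + t) / k) 1 ∅) ↔
        w.map classIndex ∈ parkLanguage n k ∅ := by
    simpa [classOcc] using (map_classIndex_mem_parkLanguage_iff ∅ w).symm
  have hvanish (t : Fin k) (m : ℕ) (hm : (n + t) / k < m) :
      coeff m (wordEGF (parkLanguage ((n + t) / k) 1 ∅)) = 0 := by
    rw [coeff_wordEGF, wordCount_parkLanguage_eq_zero hm, Nat.cast_zero, zero_div]
  have hsum : ∑ t : Fin k, (n + t) / k = n := by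
    rw [← sum_range fun t => (n + t) / k, sum_range_add_div n hk]
  calc ((VPFk n k).card : ℚ) / n.factorial
      = coeff n (wordEGF (shuffle fun t : Fin k => parkLanguage ((n + t) / k) 1 ∅)) := by
        rw [coeff_wordEGF, wordCount_congr (classIndex_bijective n hk) hmem, card_VPFk_eq_wordCount]
    _ = coeff (∑ t : Fin k, (n + t) / k)
          (∏ t : Fin k, wordEGF (parkLanguage ((n + t) / k) 1 ∅)) := by
        rw [wordEGF_shuffle, hsum]
    _ = ∏ t : Fin k, coeff ((n + t) / k) (wordEGF (parkLanguage ((n + t) / k) 1 ∅)) :=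
        coeff_sum_prod_of_coeff_eq_zero _ _ _ fun t _ => hvanish t
    _ = _ := by
        simp only [coeff_wordEGF, VPF, card_VPFk_eq_wordCount, prod_range]

theorem card_VPFk_eq_multinomial_mul_prod (n : ℕ) {k : ℕ} (hk : 0 < k) :
    (VPFk n k).card = Nat.multinomial (range k) (fun t => (n + t) / k) *
      ∏ t ∈ range k, (VPF ((n + t) / k)).card := by
  have hcard := card_VPFk_div_factorial n hk
  have hmult := Nat.multinomial_spec (range k) fun t => (n + t) / k
  rw [sum_range_add_div n hk] at hmult
  rw [prod_div_distrib, ← hmult] at hcard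
  have hne : (Nat.multinomial (range k) fun t => (n + t) / k : ℚ) ≠ 0 :=
    Nat.cast_ne_zero.2 (Nat.multinomial_pos _ _).ne'
  push_cast at hcard
  field_simp at hcard
  exact_mod_cast hcard

theorem prod_range_add_div {M : Type*} [CommMonoid M] {k b : ℕ} (hb : b < k) (a : ℕ)
    (f : ℕ → M) :
    ∏ t ∈ range k, f ((k * a + b + t) / k) = f (a + 1) ^ b * f a ^ (k - b) := by
  have hk : 0 < k := by omega
  have hlow : ∀ t ∈ range (k - b), f ((k * a + b + t) / k) = f a := fun t ht => by
    rw [mem_range] at ht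
    rw [Nat.add_assoc, Nat.mul_add_div hk, Nat.div_eq_of_lt (by omega), add_zero]
  have hhigh : ∀ t ∈ Ico (k - b) k, f ((k * a + b + t) / k) = f (a + 1) := fun t ht => by
    rw [mem_Ico] at ht
    rw [Nat.add_assoc, Nat.mul_add_div hk, Nat.div_eq_of_lt_le (by omega : 1 * k ≤ _) (by omega)]
  rw [← prod_range_mul_prod_Ico _ (Nat.sub_le k b), prod_eq_pow_card hlow, prod_eq_pow_card hhigh,
    card_range, Nat.card_Ico, Nat.sub_sub_self hb.le, mul_comm]

end Parking

/-- For `1 ≤ k ≤ n` with `n = k·a + b`, `0 ≤ b ≤ k − 1`,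
`|VPF_n(k)| = (n! / ∏_{t=0}^{k-1} ⌊(n+t)/k⌋!) · |VPF_{a+1}|^b · |VPF_a|^{k−b}`
(the division is exact, so natural-number division computes it). -/
theorem vpfk_card_eq (k n a b : ℕ) (hk : 1 ≤ k) (hkn : k ≤ n)
    (hn : n = k * a + b) (hb : b ≤ k - 1) :
    (VPFk n k).card =
      (Nat.factorial n / ∏ t ∈ Finset.range k, Nat.factorial ((n + t) / k)) *
        (VPF (a + 1)).card ^ b * (VPF a).card ^ (k - b) := by
  subst hn
  have hbk : b < k := by omega
  rw [card_VPFk_eq_multinomial_mul_prod _ hk, Nat.multinomial, sum_range_add_div _ hk,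
    prod_range_add_div hbk a fun m => (VPF m).card, mul_assoc]
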